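/- Let a < t0 < b be reals and let U : (a,b) → ℝ^P be continuous at t0 with U(t0) = U0, and real-analytic on (a,t0) ∪ (t0,b). Let F be an ℝ^P-valued real-analytic map on an open set G ⊆ ℝ^P × ℝ containing both (U0, t0) and the set {(U(t), t) : t ∈ (a,t0) ∪ (t0,b)}, and assume F is uniformly Lipschitz-like at (U0, t0). If U′(t) = F(U(t), t) for all t ∈ (a,t0) ∪ (t0,b), then U′(t) = F(U(t), t) for all t ∈ (a,b) and U is real-analytic at t0. -/

import Mathlib

open Set

/-!
A solution of `γ' = v(t, γ)` with analytic `v` may be taken autonomous, `γ' = f(γ)`, by adjoining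
the time as a coordinate. The rescaled arcs `y_l(s) = γ(t₀ + l s)`, `0 ≤ s ≤ 1`, then form a curve
in the Banach space `C([0, 1], E)` which solves `y = y₀ + l • ∫₀ˢ f ∘ y`. The superposition operator
`y ↦ f ∘ y` is analytic near the constant arc `y₀`, since a power series of `f` can be applied
pointwise, so the analytic implicit function theorem makes `l ↦ y_l` analytic at `0`; evaluation
at `s = 1` gives the analyticity of `γ` at `t₀`.

At the welding point the right-hand side `F (U t) t` is continuous, so the mean value inequality
extends the differential equation across it.
-/

open Filter Topology unitInterval
open scoped ContDiff

section Superposition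

variable {𝕜 : Type*} [NontriviallyNormedField 𝕜]
  (K : Type*) [TopologicalSpace K] [CompactSpace K]
  {H : Type*} [NormedAddCommGroup H] [NormedSpace 𝕜 H]

section PointwiseMultilinear

variable {ι : Type*} {E : ι → Type*}

lemma update_continuousMap_apply [DecidableEq ι] {X : Type*} [TopologicalSpace X]
    [∀ i, TopologicalSpace (E i)] (x : ∀ i, C(X, E i)) (i : ι) (c : C(X, E i)) (k : X) :
    (fun j => Function.update x i c j k) = Function.update (fun j => x j k) i (c k) :=
  funext fun j => Function.apply_update (fun _ g => g k) x i c j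

variable [Fintype ι] [∀ i, NormedAddCommGroup (E i)] [∀ i, NormedSpace 𝕜 (E i)]

/-- The pointwise action of a continuous multilinear map on continuous functions, as a continuous
multilinear map between spaces of continuous functions with the maximum norm. -/
noncomputable def pointwiseMultilinear (m : ContinuousMultilinearMap 𝕜 E H) :
    ContinuousMultilinearMap 𝕜 (fun i => C(K, E i)) C(K, H) :=
  open scoped Classical in
  MultilinearMap.mkContinuous
    (MultilinearMap.mk'
      (fun x => ⟨fun k => m fun i => x i k,
        m.cont.comp (continuous_pi fun i => (x i).continuous)⟩)
      (fun x i a b => ContinuousMap.ext fun k => by simp [update_continuousMap_apply])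
      (fun x i c a => ContinuousMap.ext fun k => by simp [update_continuousMap_apply]))
    ‖m‖
    (fun x => (ContinuousMap.norm_le _ (by positivity)).2 fun k =>
      (m.le_opNorm _).trans (by
        gcongr with i
        exact (x i).norm_coe_le_norm k))

lemma norm_pointwiseMultilinear_le (m : ContinuousMultilinearMap 𝕜 E H) :
    ‖pointwiseMultilinear K m‖ ≤ ‖m‖ :=
  MultilinearMap.mkContinuous_norm_le _ (norm_nonneg m) _

end PointwiseMultilinear

variable {E : Type*} [NormedAddCommGroup E] [NormedSpace 𝕜 E]

/-- The power series of the superposition operator `y ↦ f ∘ y` on `C(K, E)` around a constant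
function with value `x`, when `p` is the power series of `f` around `x`. -/
noncomputable def superpositionSeries (p : FormalMultilinearSeries 𝕜 E H) :
    FormalMultilinearSeries 𝕜 C(K, E) C(K, H) :=
  fun n => pointwiseMultilinear K (p n)

lemma radius_le_radius_superpositionSeries (p : FormalMultilinearSeries 𝕜 E H) :
    p.radius ≤ (superpositionSeries K p).radius :=
  FormalMultilinearSeries.radius_le_of_le fun n => norm_pointwiseMultilinear_le K (p n)

variable {K}

lemma superpositionSeries_sum_apply [CompleteSpace H] {f : E → H}
    {p : FormalMultilinearSeries 𝕜 E H} {x : E} {r : ENNReal}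
    (hf : HasFPowerSeriesOnBall f p x r) {z : C(K, E)} (hz : z ∈ Metric.eball 0 r) (k : K) :
    (superpositionSeries K p).sum z k = f (x + z k) := by
  have hsum := (superpositionSeries K p).hasSum
    (Metric.eball_subset_eball (hf.r_le.trans (radius_le_radius_superpositionSeries K p)) hz)
  have hzk : z k ∈ Metric.eball (0 : E) r := by
    rw [mem_eball_zero_iff] at hz ⊢
    exact (enorm_le_iff_norm_le.2 (z.norm_coe_le_norm k)).trans_lt hz
  exact (hsum.mapL (ContinuousMap.evalCLM 𝕜 k)).unique (hf.hasSum hzk)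

lemma exists_analyticAt_superposition [CompleteSpace H] {f : E → H} {x : E}
    (hf : AnalyticAt 𝕜 f x) :
    ∃ N : C(K, E) → C(K, H), AnalyticAt 𝕜 N (ContinuousMap.const K x) ∧
      ∀ᶠ y in 𝓝 (ContinuousMap.const K x), ∀ k, N y k = f (y k) := by
  obtain ⟨p, r, hp⟩ := hf
  have hpos : 0 < (superpositionSeries K p).radius :=
    hp.r_pos.trans_le (hp.r_le.trans (radius_le_radius_superpositionSeries K p))
  refine ⟨fun y => (superpositionSeries K p).sum (y - ContinuousMap.const K x), ?_, ?_⟩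
  · simpa only [zero_add] using
      ((superpositionSeries K p).hasFPowerSeriesOnBall hpos).analyticAt.comp_sub
        (ContinuousMap.const K x)
  · filter_upwards [Metric.eball_mem_nhds (ContinuousMap.const K x) hp.r_pos] with y hy k
    rw [Metric.mem_eball, edist_eq_enorm_sub, ← mem_eball_zero_iff] at hy
    simpa using superpositionSeries_sum_apply hp hy k

end Superposition

lemma analyticAt_of_eventually_eq_add_smul {𝕜 : Type*} [RCLike 𝕜] {X : Type*}
    [NormedAddCommGroup X] [NormedSpace 𝕜 X] [CompleteSpace X] {T : 𝕜 × X → X} {y : 𝕜 → X}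
    (hT : AnalyticAt 𝕜 T (0, y 0)) (hy : ContinuousAt y 0)
    (heq : ∀ᶠ l in 𝓝 0, y l = y 0 + l • T (l, y l)) : AnalyticAt 𝕜 y 0 := by
  let Φ : 𝕜 × X → X := fun q => q.2 - q.1 • T q
  have hΦ : ContDiffAt 𝕜 ω Φ (0, y 0) :=
    (analyticAt_snd.sub (analyticAt_fst.smul hT)).contDiffAt
  have hpartial : fderiv 𝕜 Φ (0, y 0) ∘L .inr 𝕜 𝕜 X = .id 𝕜 X := by
    have hΦ' := (hasFDerivAt_snd (𝕜 := 𝕜) (p := ((0 : 𝕜), y 0))).sub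
      (hasFDerivAt_fst.smul hT.differentiableAt.hasFDerivAt)
    rw [show fderiv 𝕜 Φ (0, y 0) = _ from hΦ'.fderiv]
    ext x
    simp
  have hinv : (fderiv 𝕜 Φ (0, y 0) ∘L .inr 𝕜 𝕜 X).IsInvertible :=
    hpartial ▸ ⟨.refl 𝕜 X, rfl⟩
  have hgraph : Tendsto (fun l => (l, y l)) (𝓝 0) (𝓝 (0, y 0)) :=
    (continuousAt_id.prodMk hy).tendsto
  have hψ : hΦ.implicitFunction (by simp) hinv =ᶠ[𝓝 0] y := by
    filter_upwards [heq,
      hgraph.eventually (hΦ.eventually_apply_eq_iff_implicitFunction (by simp) hinv)] with l hl hiff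
    exact hiff.1 (by simpa [Φ, sub_eq_iff_eq_add] using hl)
  exact (hΦ.contDiffAt_implicitFunction (by simp) hinv).analyticAt.congr hψ

lemma exists_continuous_eventuallyEq {α X : Type*} [LinearOrder α] [TopologicalSpace α]
    [OrderTopology α] [TopologicalSpace X] {f : α → X} {a : α}
    (hf : ∀ᶠ x in 𝓝 a, ContinuousAt f x) : ∃ g, Continuous g ∧ g =ᶠ[𝓝 a] f := by
  obtain ⟨b, c, ha, hbc, hfbc⟩ := exists_Icc_mem_subset_of_mem_nhds hf
  have hle : b ≤ c := ha.1.trans ha.2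
  refine ⟨IccExtend hle (fun x : Icc b c => f x), ?_, ?_⟩
  · refine Continuous.Icc_extend' (continuous_iff_continuousAt.2 fun x => ?_)
    exact ContinuousAt.comp (hfbc x.2) continuous_subtype_val.continuousAt
  · filter_upwards [hbc] with x hx using IccExtend_of_mem hle _ hx

section RescaledArc

variable {X : Type*} [TopologicalSpace X]

/-- The family of arcs `s ↦ γ (t₀ + l * s)` on the unit interval, as a continuous curve in the
parameter `l`. -/
def rescaledArc (γ : C(ℝ, X)) (t₀ : ℝ) : C(ℝ, C(I, X)) :=
  ContinuousMap.curry ⟨fun z : ℝ × I => γ (t₀ + z.1 * z.2), by fun_prop⟩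

lemma rescaledArc_apply (γ : C(ℝ, X)) (t₀ l : ℝ) (s : I) :
    rescaledArc γ t₀ l s = γ (t₀ + l * s) :=
  rfl

lemma rescaledArc_zero (γ : C(ℝ, X)) (t₀ : ℝ) :
    rescaledArc γ t₀ 0 = ContinuousMap.const I (γ t₀) := by
  ext s
  simp [rescaledArc_apply]

end RescaledArc

section DifferentialEquation

variable {E : Type*} [NormedAddCommGroup E] [NormedSpace ℝ E]

lemma hasDerivAt_of_eventually_hasDerivAt_of_ne {f g : ℝ → E} {x : ℝ}
    (hfg : ∀ᶠ y in 𝓝[≠] x, HasDerivAt f (g y) y) (hf : ContinuousAt f x)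
    (hg : ContinuousAt g x) : HasDerivAt f (g x) x := by
  have hdiff : DifferentiableOn ℝ f {y | HasDerivAt f (g y) y} := fun y hy =>
    hy.differentiableAt.differentiableWithinAt
  have hderiv : Tendsto (deriv f) (𝓝[≠] x) (𝓝 (g x)) :=
    hg.continuousWithinAt.tendsto.congr' (hfg.mono fun _ hy => hy.deriv.symm)
  have hright : HasDerivWithinAt f (g x) (Ici x) x :=
    hasDerivWithinAt_Ici_of_tendsto_deriv hdiff hf.continuousWithinAt
      (nhdsGT_le_nhdsNE x hfg) (hderiv.mono_left (nhdsGT_le_nhdsNE x))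
  have hleft : HasDerivWithinAt f (g x) (Iic x) x :=
    hasDerivWithinAt_Iic_of_tendsto_deriv hdiff hf.continuousWithinAt
      (nhdsLT_le_nhdsNE x hfg) (hderiv.mono_left (nhdsLT_le_nhdsNE x))
  simpa using hleft.union hright

/-- The primitive vanishing at `0`, as a continuous linear operator on continuous functions on the
unit interval; the integrand is extended by constants outside the interval. -/
noncomputable def primitiveCLM : C(I, E) →L[ℝ] C(I, E) :=
  have hcont (g : C(I, E)) : Continuous (IccExtend zero_le_one g) := g.continuous.Icc_extend'
  LinearMap.mkContinuous
    { toFun := fun g => ⟨fun s => ∫ r in (0 : ℝ)..s, IccExtend zero_le_one g r,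
        (intervalIntegral.continuous_primitive
          (fun a b => (hcont g).intervalIntegrable a b) 0).comp continuous_subtype_val⟩
      map_add' := fun g h => ContinuousMap.ext fun s =>
        intervalIntegral.integral_add ((hcont g).intervalIntegrable 0 s)
          ((hcont h).intervalIntegrable 0 s)
      map_smul' := fun c _ => ContinuousMap.ext fun _ => intervalIntegral.integral_smul c _ }
    1
    (fun g => (ContinuousMap.norm_le _ (by positivity)).2 fun s => by
      calc ‖∫ r in (0 : ℝ)..s, IccExtend zero_le_one g r‖ ≤ ‖g‖ * |(s : ℝ) - 0| :=
            intervalIntegral.norm_integral_le_of_norm_le_const fun _ _ => g.norm_coe_le_norm _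
        _ ≤ 1 * ‖g‖ := by
            rw [sub_zero, abs_of_nonneg s.2.1, mul_comm]
            gcongr
            exact s.2.2)

lemma eq_add_primitiveCLM_of_hasDerivAt [CompleteSpace E] {φ : ℝ → E} {g : C(I, E)}
    (hφ : ∀ r : I, HasDerivAt φ (g r) r) (s : I) : φ s = φ 0 + primitiveCLM g s := by
  have hderiv : ∀ r ∈ uIcc (0 : ℝ) s, HasDerivAt φ (IccExtend zero_le_one g r) r := by
    intro r hr
    rw [uIcc_of_le s.2.1] at hr
    have hrI : r ∈ I := ⟨hr.1, hr.2.trans s.2.2⟩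
    simpa only [IccExtend_of_mem zero_le_one g hrI] using hφ ⟨r, hrI⟩
  have hint := intervalIntegral.integral_eq_sub_of_hasDerivAt hderiv
    (g.continuous.Icc_extend'.intervalIntegrable 0 s)
  exact (add_eq_of_eq_sub' hint).symm

lemma eventually_hasDerivAt_rescale {γ f : ℝ → E} {t₀ : ℝ}
    (hγ : ∀ᶠ t in 𝓝 t₀, HasDerivAt γ (f t) t) :
    ∀ᶠ l in 𝓝 0, ∀ s : I,
      HasDerivAt (fun r : ℝ => γ (t₀ + l * r)) (l • f (t₀ + l * s)) (s : ℝ) := by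
  obtain ⟨δ, hδ, hball⟩ := Metric.eventually_nhds_iff.1 hγ
  filter_upwards [Metric.ball_mem_nhds (0 : ℝ) hδ] with l hl s
  have hdist : dist (t₀ + l * s) t₀ < δ := by
    rw [mem_ball_zero_iff, Real.norm_eq_abs] at hl
    rw [Real.dist_eq, add_sub_cancel_left, abs_mul, abs_of_nonneg s.2.1]
    exact (mul_le_of_le_one_right (abs_nonneg l) s.2.2).trans_lt hl
  have haffine : HasDerivAt (fun r : ℝ => t₀ + l * r) l (s : ℝ) := by
    simpa using ((hasDerivAt_id (s : ℝ)).const_mul l).const_add t₀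
  exact (hball hdist).scomp (s : ℝ) haffine

lemma eventually_rescaledArc_eq_add_smul_primitiveCLM [CompleteSpace E] {γ : C(ℝ, E)} {t₀ : ℝ}
    {f : E → E} (hγ : IsIntegralCurveAt γ (fun _ => f) t₀) {N : C(I, E) → C(I, E)}
    (hN : ∀ᶠ y in 𝓝 (ContinuousMap.const I (γ t₀)), ∀ s, N y s = f (y s)) :
    ∀ᶠ l in 𝓝 0, rescaledArc γ t₀ l =
      rescaledArc γ t₀ 0 + l • primitiveCLM (N (rescaledArc γ t₀ l)) := by
  rw [← rescaledArc_zero] at hN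
  filter_upwards [(rescaledArc γ t₀).continuous.continuousAt.eventually hN,
    eventually_hasDerivAt_rescale hγ] with l hNl hderiv
  have hderivN (s : I) : HasDerivAt (fun r : ℝ => γ (t₀ + l * r))
      ((l • N (rescaledArc γ t₀ l)) s) (s : ℝ) := by
    simpa only [ContinuousMap.smul_apply, hNl, rescaledArc_apply] using hderiv s
  ext s
  simpa [rescaledArc_apply] using eq_add_primitiveCLM_of_hasDerivAt hderivN s

lemma analyticAt_of_isIntegralCurveAt_autonomous [CompleteSpace E] {γ : ℝ → E} {t₀ : ℝ}
    {f : E → E} (hγ : IsIntegralCurveAt γ (fun _ => f) t₀) (hf : AnalyticAt ℝ f (γ t₀)) :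
    AnalyticAt ℝ γ t₀ := by
  obtain ⟨g, hg, hgγ⟩ := exists_continuous_eventuallyEq (hγ.mono fun _ ht => ht.continuousAt)
  lift g to C(ℝ, E) using hg
  have hg' : IsIntegralCurveAt g (fun _ => f) t₀ := by
    filter_upwards [hγ, hgγ.eventuallyEq_nhds] with t ht hgt
    simpa only [hgt.eq_of_nhds] using ht.congr_of_eventuallyEq hgt
  rw [← hgγ.eq_of_nhds] at hf
  obtain ⟨N, hN, hNf⟩ := exists_analyticAt_superposition (K := I) hf
  have hT : AnalyticAt ℝ (fun q : ℝ × C(I, E) => primitiveCLM (N q.2)) (0, rescaledArc g t₀ 0) :=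
    (primitiveCLM.analyticAt _).fun_comp
      (hN.fun_comp_of_eq (f := Prod.snd) analyticAt_snd (rescaledArc_zero g t₀))
  have harc : AnalyticAt ℝ (rescaledArc g t₀) 0 :=
    analyticAt_of_eventually_eq_add_smul hT (rescaledArc g t₀).continuous.continuousAt
      (eventually_rescaledArc_eq_add_smul_primitiveCLM hg' hNf)
  have hend : AnalyticAt ℝ (fun l => rescaledArc g t₀ l 1) 0 :=
    ((ContinuousMap.evalCLM ℝ (1 : I)).analyticAt _).fun_comp harc
  refine AnalyticAt.congr ?_ hgγ
  simpa [rescaledArc_apply] using hend.comp_sub t₀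

theorem analyticAt_of_isIntegralCurveAt [CompleteSpace E] {γ : ℝ → E} {v : ℝ → E → E} {t₀ : ℝ}
    (hγ : IsIntegralCurveAt γ v t₀) (hv : AnalyticAt ℝ (fun q : ℝ × E => v q.1 q.2) (t₀, γ t₀)) :
    AnalyticAt ℝ γ t₀ := by
  have hgraph : IsIntegralCurveAt (fun t => (t, γ t)) (fun _ q => (1, v q.1 q.2)) t₀ :=
    hγ.mono fun t ht => (hasDerivAt_id t).prodMk ht
  exact analyticAt_snd.comp
    (analyticAt_of_isIntegralCurveAt_autonomous hgraph (analyticAt_const.prod hv))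

theorem stmt_4_general [CompleteSpace E] {a t₀ b : ℝ} (hat₀ : a < t₀) (ht₀b : t₀ < b)
    {U : ℝ → E} {F : E → ℝ → E} (hU : ContinuousAt U t₀)
    (hF : AnalyticAt ℝ (fun q : E × ℝ => F q.1 q.2) (U t₀, t₀))
    (hode : ∀ t ∈ Ioo a t₀ ∪ Ioo t₀ b, HasDerivAt U (F (U t) t) t) :
    (∀ t ∈ Ioo a b, HasDerivAt U (F (U t) t) t) ∧ AnalyticAt ℝ U t₀ := by
  have hnhds : Ioo a b ∈ 𝓝 t₀ := Ioo_mem_nhds hat₀ ht₀b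
  have hne : ∀ t ∈ Ioo a b, t ≠ t₀ → HasDerivAt U (F (U t) t) t := fun t ht h =>
    hode t (h.lt_or_gt.imp (fun hlt => ⟨ht.1, hlt⟩) fun hgt => ⟨hgt, ht.2⟩)
  have hFU : ContinuousAt (fun t => F (U t) t) t₀ :=
    hF.continuousAt.comp (f := fun t => (U t, t)) (hU.prodMk continuousAt_id)
  have ht₀ : HasDerivAt U (F (U t₀) t₀) t₀ :=
    hasDerivAt_of_eventually_hasDerivAt_of_ne (g := fun t => F (U t) t)
      (eventually_nhdsWithin_iff.2 (mem_of_superset hnhds hne)) hU hFU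
  have hall : ∀ t ∈ Ioo a b, HasDerivAt U (F (U t) t) t := fun t ht =>
    (eq_or_ne t t₀).elim (fun h => h ▸ ht₀) (hne t ht)
  have hcurve : IsIntegralCurveAt U (fun t x => F x t) t₀ := mem_of_superset hnhds hall
  have hswap : AnalyticAt ℝ (fun q : ℝ × E => F q.2 q.1) (t₀, U t₀) :=
    hF.fun_comp_of_eq (analyticAt_snd.prod analyticAt_fst) rfl
  exact ⟨hall, analyticAt_of_isIntegralCurveAt hcurve hswap⟩

end DifferentialEquation

/-- **Welding of real-analytic solutions across a point (Proposition `raccordo`).**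
`ℝ^P` (modelled as `Fin P → ℝ`) carries the maximum coordinate norm.  Let `U` be
real-analytic on `(a,t0) ∪ (t0,b)`, continuous at `t0` with `U t0 = U0`, and a solution of
`U' = F (U t) t` on `(a,t0) ∪ (t0,b)`, where `F` is real-analytic on an open set `G`
containing `(U0,t0)` and the graph of `U`, and uniformly Lipschitz-like at `(U0,t0)`.
Then `U' = F (U t) t` on all of `(a,b)` and `U` is real-analytic at `t0`. -/
theorem stmt_4 {P : ℕ} (a t0 b : ℝ) (hat0 : a < t0) (ht0b : t0 < b)
    (U : ℝ → Fin P → ℝ) (U0 : Fin P → ℝ)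
    (hcont : ContinuousAt U t0) (hU0 : U t0 = U0)
    (hUan : ∀ t ∈ Ioo a t0 ∪ Ioo t0 b, AnalyticAt ℝ U t)
    (G : Set ((Fin P → ℝ) × ℝ)) (hG : IsOpen G)
    (F : (Fin P → ℝ) → ℝ → Fin P → ℝ)
    (hFan : ∀ p ∈ G, AnalyticAt ℝ (fun q : (Fin P → ℝ) × ℝ => F q.1 q.2) p)
    (hmem0 : ((U0, t0) : (Fin P → ℝ) × ℝ) ∈ G)
    (hmem : ∀ t ∈ Ioo a t0 ∪ Ioo t0 b, ((U t, t) : (Fin P → ℝ) × ℝ) ∈ G)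
    (hlip : ∃ K : ℝ, ∃ O ∈ nhds ((U0, t0) : (Fin P → ℝ) × ℝ),
      ∀ (A B : Fin P → ℝ) (t : ℝ), ((A, t) : (Fin P → ℝ) × ℝ) ∈ O →
        ((B, t) : (Fin P → ℝ) × ℝ) ∈ O → ‖F A t - F B t‖ ≤ K * ‖A - B‖)
    (hode : ∀ t ∈ Ioo a t0 ∪ Ioo t0 b, HasDerivAt U (F (U t) t) t) :
    (∀ t ∈ Ioo a b, HasDerivAt U (F (U t) t) t) ∧ AnalyticAt ℝ U t0 :=
  stmt_4_general hat0 ht0b hcont (hFan _ (hU0 ▸ hmem0)) hode
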